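/- Let K ⊂ ℝ^d be compact, F : P_2(K) → ℝ lower semicontinuous and bounded below, T > 0, and for each τ > 0 let (μ_k^τ)_k be an SW-JKO sequence started at a fixed μ_0 ∈ P_2(K), with piecewise constant interpolation μ^τ : [0,T] → P_2(K). Then there exist a sequence τ_n → 0 and a curve μ : [0,T] → P_2(K), 1/2-Hölder continuous with respect to SW_2, such that for every t ∈ [0,T], μ^{τ_n}(t) converges to μ(t) in the metric SW_2, uniformly in t. -/

import Mathlib

open MeasureTheory ENNReal Metric Filter
open scoped RealInnerProductSpace NNReal

noncomputable section

/-- `ℝ^d` as a Euclidean space. -/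
abbrev Ed (d : ℕ) : Type := EuclideanSpace ℝ (Fin d)

/-- `π` is a coupling of `μ` and `ν`. -/
def IsCoupling {E : Type*} [MeasurableSpace E] (π : Measure (E × E)) (μ ν : Measure E) : Prop :=
  π.map Prod.fst = μ ∧ π.map Prod.snd = ν

/-- Squared 2-Wasserstein distance. -/
def W2sq {E : Type*} [MeasurableSpace E] [NormedAddCommGroup E] (μ ν : Measure E) : ℝ≥0∞ :=
  ⨅ (π : Measure (E × E)) (_ : IsCoupling π μ ν), ∫⁻ p, (‖p.1 - p.2‖₊ : ℝ≥0∞) ^ 2 ∂π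

/-- The uniform probability measure on the unit sphere `S^{d-1}`. -/
def unifSphere (d : ℕ) : Measure (sphere (0 : Ed d) 1) :=
  ((volume : Measure (Ed d)).toSphere Set.univ)⁻¹ • (volume : Measure (Ed d)).toSphere

/-- Projection `P^θ(x) = ⟨x, θ⟩`. -/
def proj {d : ℕ} (θ : Ed d) (x : Ed d) : ℝ := ⟪x, θ⟫

/-- Squared Sliced-Wasserstein distance. -/
def SW2sq {d : ℕ} (μ ν : Measure (Ed d)) : ℝ≥0∞ :=
  ∫⁻ θ : sphere (0 : Ed d) 1,
    W2sq (μ.map (proj (θ : Ed d))) (ν.map (proj (θ : Ed d))) ∂(unifSphere d)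

/-- Sliced-Wasserstein distance. -/
def SW2 {d : ℕ} (μ ν : Measure (Ed d)) : ℝ := Real.sqrt (SW2sq μ ν).toReal

/-- Finite second moment. -/
def FiniteSecondMoment {d : ℕ} (μ : Measure (Ed d)) : Prop :=
  ∫⁻ x, (‖x‖₊ : ℝ≥0∞) ^ 2 ∂μ < ∞

/-- `μ ∈ P_2(K)`: probability measure supported in `K` with finite second moment. -/
def MemP2 {d : ℕ} (K : Set (Ed d)) (μ : Measure (Ed d)) : Prop :=
  IsProbabilityMeasure μ ∧ μ Kᶜ = 0 ∧ FiniteSecondMoment μ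

open ProbabilityTheory Topology

/-- The (extended) Wasserstein distance on the line. -/
def W2r (μ ν : Measure ℝ) : ℝ≥0∞ := (W2sq μ ν) ^ ((1 : ℝ) / 2)

lemma W2r_sq (μ ν : Measure ℝ) : (W2r μ ν) ^ (2 : ℝ) = W2sq μ ν := by
  rw [W2r, ← ENNReal.rpow_mul]; norm_num

lemma W2sq_le_of_map {Ω : Type*} [MeasurableSpace Ω] (P : Measure Ω) {f g : Ω → ℝ}
    (hf : Measurable f) (hg : Measurable g) :
    W2sq (P.map f) (P.map g) ≤ ∫⁻ ω, (‖f ω - g ω‖₊ : ℝ≥0∞) ^ 2 ∂P := by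
  have hfg : Measurable (fun ω => (f ω, g ω)) := hf.prodMk hg
  have hc : IsCoupling (P.map (fun ω => (f ω, g ω))) (P.map f) (P.map g) := by
    constructor
    · rw [Measure.map_map measurable_fst hfg]; rfl
    · rw [Measure.map_map measurable_snd hfg]; rfl
  refine (iInf₂_le (P.map (fun ω => (f ω, g ω))) hc).trans ?_
  · rw [lintegral_map (by fun_prop) hfg]

lemma W2sq_self (μ : Measure ℝ) : W2sq μ μ = 0 := by
  have := W2sq_le_of_map μ measurable_id measurable_id
  simpa using this

lemma W2sq_comm_le (μ ν : Measure ℝ) : W2sq μ ν ≤ W2sq ν μ := by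
  refine le_iInf₂ fun π hπ => ?_
  obtain ⟨h1, h2⟩ := hπ
  rw [← h1, ← h2]
  refine (W2sq_le_of_map π measurable_snd measurable_fst).trans (le_of_eq ?_)
  congr 1; ext p; rw [← nnnorm_neg, neg_sub]

lemma W2sq_comm (μ ν : Measure ℝ) : W2sq μ ν = W2sq ν μ :=
  le_antisymm (W2sq_comm_le _ _) (W2sq_comm_le _ _)

lemma glue (π₁ π₂ : Measure (ℝ × ℝ)) [IsProbabilityMeasure π₁] [IsProbabilityMeasure π₂]
    (h : π₁.map Prod.fst = π₂.map Prod.fst) :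
    ∃ γ : Measure (ℝ × (ℝ × ℝ)), γ.map (fun p => (p.1, p.2.1)) = π₁ ∧
      γ.map (fun p => (p.1, p.2.2)) = π₂ := by
  refine ⟨π₁.fst ⊗ₘ (π₁.condKernel ×ₖ π₂.condKernel), ?_, ?_⟩
  · have := Measure.compProd_map (μ := π₁.fst) (κ := π₁.condKernel ×ₖ π₂.condKernel)
      (f := Prod.fst) measurable_fst
    rw [← Kernel.fst_eq, Kernel.fst_prod, Measure.disintegrate] at this
    exact this.symm
  · have := Measure.compProd_map (μ := π₁.fst) (κ := π₁.condKernel ×ₖ π₂.condKernel)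
      (f := Prod.snd) measurable_snd
    have h' : π₁.fst = π₂.fst := h
    rw [← Kernel.snd_eq, Kernel.snd_prod, h', Measure.disintegrate] at this
    rw [h']
    exact this.symm

lemma W2r_eq (μ ν : Measure ℝ) : W2r μ ν = ⨅ (π : {π : Measure (ℝ × ℝ) // IsCoupling π μ ν}),
    (∫⁻ p, (‖p.1 - p.2‖₊ : ℝ≥0∞) ^ 2 ∂π.1) ^ ((1 : ℝ) / 2) := by
  have h := (ENNReal.orderIsoRpow ((1 : ℝ) / 2) (by norm_num)).map_iInf
    (fun π : {π : Measure (ℝ × ℝ) // IsCoupling π μ ν} =>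
      ∫⁻ p, (‖p.1 - p.2‖₊ : ℝ≥0∞) ^ 2 ∂π.1)
  simp only [ENNReal.orderIsoRpow_apply] at h
  rw [← h, W2r, W2sq, iInf_subtype]

lemma W2r_triangle (μ ν ρ : Measure ℝ) [IsProbabilityMeasure μ] [IsProbabilityMeasure ν]
    [IsProbabilityMeasure ρ] : W2r μ ρ ≤ W2r μ ν + W2r ν ρ := by
  have hcomm : W2r μ ν = W2r ν μ := by rw [W2r, W2sq_comm]; rfl
  rw [hcomm, W2r_eq ν μ, W2r_eq ν ρ, ENNReal.iInf_add]
  refine le_iInf fun π₁ => ?_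
  rw [ENNReal.add_iInf]
  refine le_iInf fun π₂ => ?_
  obtain ⟨π₁, h1, h1'⟩ := π₁
  obtain ⟨π₂, h2, h2'⟩ := π₂
  have hp1 : IsProbabilityMeasure π₁ :=
    have : IsProbabilityMeasure (π₁.map Prod.fst) := by rw [h1]; infer_instance
    Measure.isProbabilityMeasure_of_map Prod.fst
  have hp2 : IsProbabilityMeasure π₂ :=
    have : IsProbabilityMeasure (π₂.map Prod.fst) := by rw [h2]; infer_instance
    Measure.isProbabilityMeasure_of_map Prod.fst
  obtain ⟨γ, hγ1, hγ2⟩ := glue π₁ π₂ (h1.trans h2.symm)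
  have hμ : μ = γ.map (fun p => p.2.1) := by
    rw [← h1', ← hγ1, Measure.map_map measurable_snd (by fun_prop)]; rfl
  have hρ : ρ = γ.map (fun p => p.2.2) := by
    rw [← h2', ← hγ2, Measure.map_map measurable_snd (by fun_prop)]; rfl
  have key : W2sq μ ρ ≤ ∫⁻ p, (‖p.2.1 - p.2.2‖₊ : ℝ≥0∞) ^ 2 ∂γ := by
    rw [hμ, hρ]; exact W2sq_le_of_map γ (by fun_prop) (by fun_prop)
  have e1 : ∫⁻ p, (‖p.1 - p.2‖₊ : ℝ≥0∞) ^ 2 ∂π₁ = ∫⁻ p, (‖p.1 - p.2.1‖₊ : ℝ≥0∞) ^ (2:ℝ) ∂γ := by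
    rw [← hγ1, lintegral_map (by fun_prop) (by fun_prop)]; simp
  have e2 : ∫⁻ p, (‖p.1 - p.2‖₊ : ℝ≥0∞) ^ 2 ∂π₂ = ∫⁻ p, (‖p.1 - p.2.2‖₊ : ℝ≥0∞) ^ (2:ℝ) ∂γ := by
    rw [← hγ2, lintegral_map (by fun_prop) (by fun_prop)]; simp
  simp only [e1, e2]
  refine le_trans ?_ (ENNReal.lintegral_Lp_add_le (by fun_prop) (by fun_prop) (by norm_num))
  rw [W2r]
  refine ENNReal.rpow_le_rpow (key.trans (lintegral_mono fun p => ?_)) (by norm_num)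
  rw [ENNReal.rpow_two]
  gcongr
  simp only [Pi.add_apply]
  norm_cast
  calc ‖p.2.1 - p.2.2‖₊ = ‖-(p.1 - p.2.1) + (p.1 - p.2.2)‖₊ := by congr 1; ring
    _ ≤ _ := (nnnorm_add_le _ _).trans (by rw [nnnorm_neg])

/-- Quantile function (set to zero outside `(0,1)`). -/
def quant (μ : Measure ℝ) (u : ℝ) : ℝ :=
  open Classical in if u ∈ Set.Ioo (0 : ℝ) 1 then sInf {x | u ≤ cdf μ x} else 0

lemma quant_le_iff (μ : Measure ℝ) {u : ℝ} (hu : u ∈ Set.Ioo (0 : ℝ) 1) (x : ℝ) :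
    quant μ u ≤ x ↔ u ≤ cdf μ x := by
  rw [quant, if_pos hu]
  have hbdd : BddBelow {x | u ≤ cdf μ x} := by
    obtain ⟨y, hy⟩ := ((tendsto_cdf_atBot μ).eventually (gt_mem_nhds hu.1)).exists
    refine ⟨y, fun z hz => ?_⟩
    by_contra hlt
    have h1 := monotone_cdf μ (not_le.1 hlt).le
    have h2 : u ≤ cdf μ z := hz
    linarith
  have hne : {x | u ≤ cdf μ x}.Nonempty := by
    obtain ⟨y, hy⟩ := ((tendsto_cdf_atTop μ).eventually (lt_mem_nhds hu.2)).exists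
    exact ⟨y, hy.le⟩
  constructor
  · intro h
    have hall : ∀ y, x < y → u ≤ cdf μ y := by
      intro y hy
      obtain ⟨z, hz, hzy⟩ := exists_lt_of_csInf_lt hne (lt_of_le_of_lt h hy)
      exact le_trans hz (monotone_cdf μ hzy.le)
    have hr := (cdf μ).right_continuous x
    have hr' : Tendsto (cdf μ) (𝓝[>] x) (𝓝 (cdf μ x)) := hr.mono_left (nhdsWithin_mono _ Set.Ioi_subset_Ici_self)
    exact ge_of_tendsto hr' (eventually_nhdsWithin_of_forall hall)
  · intro h
    exact csInf_le hbdd h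

lemma quant_measurable (μ : Measure ℝ) : Measurable (quant μ) := by
  refine measurable_of_Iic fun x => ?_
  have : quant μ ⁻¹' Set.Iic x = (Set.Ioo 0 1 ∩ Set.Iic (cdf μ x)) ∪
      ((Set.Ioo 0 1)ᶜ ∩ {_u | 0 ≤ x}) := by
    ext u
    by_cases hu : u ∈ Set.Ioo (0 : ℝ) 1
    · simp only [Set.mem_preimage, Set.mem_Iic, quant_le_iff μ hu, Set.mem_union, Set.mem_inter_iff,
        hu, Set.mem_compl_iff, true_and, not_true, false_and, or_false]
    · simp only [Set.mem_preimage, Set.mem_Iic, quant, Set.mem_union, Set.mem_inter_iff,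
        hu, Set.mem_compl_iff, false_and, false_or, not_false_iff, true_and, if_false,
        Set.mem_ofPred_eq]
  rw [this]
  exact (measurableSet_Ioo.inter measurableSet_Iic).union
    (measurableSet_Ioo.compl.inter (MeasurableSet.const _))

/-- Lebesgue measure on `(0,1)`. -/
def P01 : Measure ℝ := volume.restrict (Set.Ioo (0 : ℝ) 1)

instance : IsProbabilityMeasure P01 := ⟨by simp [P01]⟩

lemma P01_map_quant (μ : Measure ℝ) [IsProbabilityMeasure μ] : P01.map (quant μ) = μ := by
  have : IsProbabilityMeasure (P01.map (quant μ)) :=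
    Measure.isProbabilityMeasure_map (quant_measurable μ).aemeasurable
  refine Measure.ext_of_Iic _ _ fun x => ?_
  rw [Measure.map_apply (quant_measurable μ) measurableSet_Iic, P01,
    Measure.restrict_apply (quant_measurable μ measurableSet_Iic), ← ofReal_cdf]
  have h0 := cdf_nonneg μ x
  have h1 := cdf_le_one μ x
  apply le_antisymm
  · refine (measure_mono (t := Set.Ioc 0 (cdf μ x)) ?_).trans (by simp)
    rintro u ⟨hu, hu'⟩
    exact ⟨hu'.1, (quant_le_iff μ hu' x).1 hu⟩
  · refine le_trans (by simp) (measure_mono (s := Set.Ioo 0 (cdf μ x)) ?_)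
    rintro u ⟨hu, hu'⟩
    have hu2 : u ∈ Set.Ioo (0 : ℝ) 1 := ⟨hu, hu'.trans_le h1⟩
    exact ⟨(quant_le_iff μ hu2 x).2 hu'.le, hu2⟩

lemma W2sq_le_cdf (μ ν : Measure ℝ) [IsProbabilityMeasure μ] [IsProbabilityMeasure ν] (R : ℝ)
    (hμ : μ (Set.Icc (-R) R)ᶜ = 0) (hν : ν (Set.Icc (-R) R)ᶜ = 0) :
    W2sq μ ν ≤ ENNReal.ofReal (2 * R) *
      ∫⁻ x in Set.Icc (-R) R, ENNReal.ofReal |cdf μ x - cdf ν x| := by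
  have hb : ∀ ρ : Measure ℝ, IsProbabilityMeasure ρ → ρ (Set.Icc (-R) R)ᶜ = 0 →
      ∀ᵐ u ∂P01, quant ρ u ∈ Set.Icc (-R) R := by
    intro ρ _ hρ
    rw [← P01_map_quant ρ, Measure.map_apply (quant_measurable ρ) measurableSet_Icc.compl] at hρ
    exact hρ
  set S : Set (ℝ × ℝ) := {p | quant μ p.1 ≤ p.2 ∧ p.2 < quant ν p.1} ∪
    {p | quant ν p.1 ≤ p.2 ∧ p.2 < quant μ p.1} with hS
  have hqm := quant_measurable μ
  have hqn := quant_measurable ν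
  have hSm : MeasurableSet S := by
    have a1 : Measurable fun p : ℝ × ℝ => quant μ p.1 := hqm.comp measurable_fst
    have a2 : Measurable fun p : ℝ × ℝ => quant ν p.1 := hqn.comp measurable_fst
    exact ((measurableSet_le a1 measurable_snd).inter (measurableSet_lt measurable_snd a2)).union
      ((measurableSet_le a2 measurable_snd).inter (measurableSet_lt measurable_snd a1))
  calc W2sq μ ν = W2sq (P01.map (quant μ)) (P01.map (quant ν)) := by
        rw [P01_map_quant, P01_map_quant]
    _ ≤ ∫⁻ u, (‖quant μ u - quant ν u‖₊ : ℝ≥0∞) ^ 2 ∂P01 := W2sq_le_of_map P01 hqm hqn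
    _ ≤ ∫⁻ u, (ENNReal.ofReal (2 * R) *
          ∫⁻ x in Set.Icc (-R) R, S.indicator 1 (u, x)) ∂P01 := by
        refine lintegral_mono_ae ?_
        filter_upwards [hb μ inferInstance hμ, hb ν inferInstance hν] with u h1 h2
        have e : (‖quant μ u - quant ν u‖₊ : ℝ≥0∞) = ENNReal.ofReal |quant μ u - quant ν u| := by
          rw [← Real.norm_eq_abs, ofReal_norm]; rfl
        rw [sq]
        gcongr
        · rw [e]
          apply ENNReal.ofReal_le_ofReal
          rw [abs_le]; constructor <;> linarith [h1.1, h1.2, h2.1, h2.2]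
        · have hsec : (fun x => S.indicator (1 : ℝ × ℝ → ℝ≥0∞) (u, x)) =
              (Prod.mk u ⁻¹' S).indicator 1 := by
            ext x; rfl
          rw [hsec, lintegral_indicator_one (measurable_prodMk_left hSm),
            Measure.restrict_apply (measurable_prodMk_left hSm), e]
          rcases le_total (quant μ u) (quant ν u) with h | h
          · refine le_trans ?_ (measure_mono (s := Set.Ico (quant μ u) (quant ν u)) ?_)
            · rw [Real.volume_Ico, abs_of_nonpos (by linarith)]; simp
            · rintro x ⟨hx1, hx2⟩
              exact ⟨Or.inl ⟨hx1, hx2⟩, by linarith [h1.1], by linarith [h2.2]⟩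
          · refine le_trans ?_ (measure_mono (s := Set.Ico (quant ν u) (quant μ u)) ?_)
            · rw [Real.volume_Ico, abs_of_nonneg (by linarith)]
            · rintro x ⟨hx1, hx2⟩
              exact ⟨Or.inr ⟨hx1, hx2⟩, by linarith [h2.1], by linarith [h1.2]⟩
    _ = ENNReal.ofReal (2 * R) *
          ∫⁻ u, (∫⁻ x in Set.Icc (-R) R, S.indicator 1 (u, x)) ∂P01 := by
        rw [lintegral_const_mul' _ _ ENNReal.ofReal_ne_top]
    _ = ENNReal.ofReal (2 * R) *
          ∫⁻ x in Set.Icc (-R) R, ∫⁻ u, S.indicator 1 (u, x) ∂P01 := by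
        rw [lintegral_lintegral_swap]
        exact (measurable_one.indicator hSm).aemeasurable
    _ ≤ _ := by
        gcongr with x
        have hsec : (fun u => S.indicator (1 : ℝ × ℝ → ℝ≥0∞) (u, x)) =
            ((fun u => (u, x)) ⁻¹' S).indicator 1 := by
          ext u; rfl
        have hm : MeasurableSet ((fun u => (u, x)) ⁻¹' S) := measurable_prodMk_right hSm
        rw [hsec, lintegral_indicator_one hm, P01, Measure.restrict_apply hm]
        refine (measure_mono (t := Set.uIoc (cdf μ x) (cdf ν x)) ?_).trans ?_
        · rintro u ⟨hu, hu'⟩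
          rw [Set.mem_uIoc]
          rcases hu with ⟨a, b⟩ | ⟨a, b⟩
          · have a' := (quant_le_iff μ hu' x).1 a
            have b' := fun h => not_le.2 b ((quant_le_iff ν hu' x).2 h)
            exact Or.inr ⟨not_le.1 b', a'⟩
          · have a' := (quant_le_iff ν hu' x).1 a
            have b' := fun h => not_le.2 b ((quant_le_iff μ hu' x).2 h)
            exact Or.inl ⟨not_le.1 b', a'⟩
        · rw [Set.uIoc, Real.volume_Ioc, max_sub_min_eq_abs, abs_sub_comm]

lemma tendsto_W2sq {ι : Type*} {l : Filter ι} [l.IsCountablyGenerated]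
    (μs : ι → ProbabilityMeasure ℝ) (μ : ProbabilityMeasure ℝ) (h : Tendsto μs l (𝓝 μ)) (R : ℝ)
    (hs : ∀ᶠ i in l, (μs i : Measure ℝ) (Set.Icc (-R) R)ᶜ = 0)
    (hμ : (μ : Measure ℝ) (Set.Icc (-R) R)ᶜ = 0) :
    Tendsto (fun i => W2sq (μs i : Measure ℝ) (μ : Measure ℝ)) l (𝓝 0) := by
  have hlim : Tendsto (fun i => ENNReal.ofReal (2 * R) *
      ∫⁻ x in Set.Icc (-R) R, ENNReal.ofReal |cdf (μs i : Measure ℝ) x - cdf (μ : Measure ℝ) x|) l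
      (𝓝 (ENNReal.ofReal (2 * R) * ∫⁻ x in Set.Icc (-R) R, 0)) := by
    refine ENNReal.Tendsto.const_mul ?_ (Or.inr ENNReal.ofReal_ne_top)
    refine tendsto_lintegral_filter_of_dominated_convergence (fun _ => 1) ?_ ?_ ?_ ?_
    · refine Eventually.of_forall fun i => ?_
      have m1 : Measurable (cdf (μs i : Measure ℝ)) := (monotone_cdf _).measurable
      have m2 : Measurable (cdf (μ : Measure ℝ)) := (monotone_cdf _).measurable
      exact (m1.sub m2).abs.ennreal_ofReal
    · refine Eventually.of_forall fun i => Eventually.of_forall fun x => ?_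
      refine ENNReal.ofReal_le_one.2 ?_
      rw [abs_le]
      constructor <;> linarith [cdf_nonneg (μs i : Measure ℝ) x, cdf_nonneg (μ : Measure ℝ) x,
        cdf_le_one (μs i : Measure ℝ) x, cdf_le_one (μ : Measure ℝ) x]
    · simp
    · have hc : {x : ℝ | 0 < (μ : Measure ℝ) {x}}.Countable :=
        Measure.countable_meas_pos_of_disjoint_iUnion (fun x => measurableSet_singleton x)
          (fun x y hxy => by simpa using hxy)
      refine ae_restrict_of_ae ?_
      filter_upwards [hc.ae_notMem volume] with x hx
      have hx0 : (μ : Measure ℝ) {x} = 0 := by simpa using hx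
      have := ProbabilityMeasure.tendsto_measure_of_null_frontier_of_tendsto' h
        (E := Set.Iic x) (by rw [frontier_Iic]; exact hx0)
      have h2 := (ENNReal.tendsto_toReal (measure_ne_top _ _)).comp this
      have h3 : Tendsto (fun i => cdf (μs i : Measure ℝ) x) l (𝓝 (cdf (μ : Measure ℝ) x)) := by
        simp only [cdf_eq_real]; exact h2
      have h4 := (h3.sub_const (cdf (μ : Measure ℝ) x)).abs
      simpa using ENNReal.tendsto_ofReal h4
  rw [lintegral_zero, mul_zero] at hlim
  refine tendsto_of_tendsto_of_tendsto_of_le_of_le' tendsto_const_nhds hlim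
    (Eventually.of_forall fun _ => zero_le) ?_
  filter_upwards [hs] with i hi
  exact W2sq_le_cdf _ _ R hi hμ

lemma proj_continuous {d : ℕ} (θ : Ed d) : Continuous (proj θ) := by
  unfold proj; fun_prop

lemma proj_measurable {d : ℕ} (θ : Ed d) : Measurable (proj θ) := (proj_continuous θ).measurable

lemma map_proj_prob {d : ℕ} (μ : Measure (Ed d)) [IsProbabilityMeasure μ] (θ : Ed d) :
    IsProbabilityMeasure (μ.map (proj θ)) :=
  Measure.isProbabilityMeasure_map (proj_measurable θ).aemeasurable

lemma map_proj_supp {d : ℕ} {μ : Measure (Ed d)} {R : ℝ} {K : Set (Ed d)}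
    (hKR : K ⊆ closedBall 0 R) (hμ : μ Kᶜ = 0) (θ : sphere (0 : Ed d) 1) :
    (μ.map (proj (θ : Ed d))) (Set.Icc (-R) R)ᶜ = 0 := by
  rw [Measure.map_apply (proj_measurable _) measurableSet_Icc.compl]
  refine measure_mono_null ?_ hμ
  intro x hx hxK
  apply hx
  have h1 : ‖x‖ ≤ R := by simpa using hKR hxK
  have h2 : ‖(θ : Ed d)‖ = 1 := by simp
  have h3 := abs_real_inner_le_norm x (θ : Ed d)
  rw [h2, mul_one] at h3
  exact abs_le.1 (h3.trans h1)

lemma W2r_proj_lip {d : ℕ} {μ : Measure (Ed d)} [IsProbabilityMeasure μ] {R : ℝ} {K : Set (Ed d)}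
    (hKR : K ⊆ closedBall 0 R) (hμ : μ Kᶜ = 0) (θ θ' : sphere (0 : Ed d) 1) :
    W2r (μ.map (proj (θ : Ed d))) (μ.map (proj (θ' : Ed d))) ≤ ENNReal.ofReal R * edist θ θ' := by
  have hae : ∀ᵐ x ∂μ, x ∈ K := hμ
  have h : W2sq (μ.map (proj (θ : Ed d))) (μ.map (proj (θ' : Ed d))) ≤
      (ENNReal.ofReal R * edist θ θ') ^ (2 : ℝ) := by
    refine (W2sq_le_of_map μ (proj_measurable _) (proj_measurable _)).trans ?_
    refine (lintegral_mono_ae (g := fun _ => (ENNReal.ofReal R * edist θ θ') ^ (2 : ℝ)) ?_).trans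
      (by simp)
    filter_upwards [hae] with x hx
    rw [← ENNReal.rpow_two]
    refine ENNReal.rpow_le_rpow ?_ (by norm_num)
    have h1 : ‖x‖ ≤ R := by simpa using hKR hx
    have e : proj (θ : Ed d) x - proj (θ' : Ed d) x = ⟪x, (θ : Ed d) - θ'⟫ := by
      simp only [proj, inner_sub_right]
    rw [e, Subtype.edist_eq, edist_eq_enorm_sub, ← ofReal_norm ((θ : Ed d) - θ'),
      ← ENNReal.ofReal_mul ((norm_nonneg _).trans h1)]
    change ‖⟪x, (θ : Ed d) - θ'⟫‖ₑ ≤ _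
    rw [← ofReal_norm]
    refine ENNReal.ofReal_le_ofReal ((norm_inner_le_norm _ _).trans ?_)
    gcongr
  rw [W2r]
  refine (ENNReal.rpow_le_rpow h (by norm_num : (0 : ℝ) ≤ 1 / 2)).trans (le_of_eq ?_)
  rw [← ENNReal.rpow_mul]; norm_num

lemma W2r_comm (μ ν : Measure ℝ) : W2r μ ν = W2r ν μ := by rw [W2r, W2sq_comm]; rfl

lemma W2r_proj_continuous {d : ℕ} {μ ν : Measure (Ed d)} {R : ℝ} {K : Set (Ed d)}
    (hKR : K ⊆ closedBall 0 R) (hμ : MemP2 K μ) (hν : MemP2 K ν) :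
    Continuous fun θ : sphere (0 : Ed d) 1 =>
      W2r (μ.map (proj (θ : Ed d))) (ν.map (proj (θ : Ed d))) := by
  have := hμ.1
  have := hν.1
  refine continuous_of_le_add_edist (ENNReal.ofReal R + ENNReal.ofReal R)
    (by simp) fun θ θ' => ?_
  have := map_proj_prob μ (θ : Ed d)
  have := map_proj_prob μ (θ' : Ed d)
  have := map_proj_prob ν (θ : Ed d)
  have := map_proj_prob ν (θ' : Ed d)
  have t1 := W2r_triangle (μ.map (proj (θ : Ed d))) (μ.map (proj (θ' : Ed d)))
    (ν.map (proj (θ : Ed d)))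
  have t2 := W2r_triangle (μ.map (proj (θ' : Ed d))) (ν.map (proj (θ' : Ed d)))
    (ν.map (proj (θ : Ed d)))
  have l1 := W2r_proj_lip hKR hμ.2.1 θ θ'
  have l2 := W2r_proj_lip hKR hν.2.1 θ θ'
  rw [W2r_comm] at l2
  calc _ ≤ _ := t1
    _ ≤ _ := add_le_add l1 t2
    _ ≤ _ := add_le_add le_rfl (add_le_add le_rfl l2)
    _ = _ := by ring

lemma W2sq_proj_measurable {d : ℕ} {μ ν : Measure (Ed d)} {R : ℝ} {K : Set (Ed d)}
    (hKR : K ⊆ closedBall 0 R) (hμ : MemP2 K μ) (hν : MemP2 K ν) :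
    Measurable fun θ : sphere (0 : Ed d) 1 =>
      W2sq (μ.map (proj (θ : Ed d))) (ν.map (proj (θ : Ed d))) := by
  simp only [← W2r_sq]
  exact (W2r_proj_continuous hKR hμ hν).measurable.pow_const _

lemma W2sq_proj_le {d : ℕ} {μ ν : Measure (Ed d)} {R : ℝ} {K : Set (Ed d)}
    (hKR : K ⊆ closedBall 0 R) (hμ : MemP2 K μ) (hν : MemP2 K ν) (θ : sphere (0 : Ed d) 1) :
    W2sq (μ.map (proj (θ : Ed d))) (ν.map (proj (θ : Ed d))) ≤
      ENNReal.ofReal (2 * R) * ENNReal.ofReal (R + R) := by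
  have := hμ.1
  have := hν.1
  have := map_proj_prob μ (θ : Ed d)
  have := map_proj_prob ν (θ : Ed d)
  refine (W2sq_le_cdf _ _ R (map_proj_supp hKR hμ.2.1 θ) (map_proj_supp hKR hν.2.1 θ)).trans ?_
  gcongr
  refine (lintegral_mono (g := fun _ => 1) fun x => ?_).trans (by simp)
  refine ENNReal.ofReal_le_one.2 ?_
  rw [abs_le]
  constructor <;> linarith [cdf_nonneg (μ.map (proj (θ : Ed d))) x,
    cdf_nonneg (ν.map (proj (θ : Ed d))) x,
    cdf_le_one (μ.map (proj (θ : Ed d))) x, cdf_le_one (ν.map (proj (θ : Ed d))) x]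

lemma unifSphere_le (d : ℕ) : unifSphere d Set.univ ≤ 1 := by
  rw [unifSphere, Measure.smul_apply, smul_eq_mul]
  exact ENNReal.inv_mul_le_one _

instance unifSphere_finite (d : ℕ) : IsFiniteMeasure (unifSphere d) :=
  ⟨(unifSphere_le d).trans_lt (by simp)⟩

lemma SW2sq_ne_top {d : ℕ} {μ ν : Measure (Ed d)} {R : ℝ} {K : Set (Ed d)}
    (hKR : K ⊆ closedBall 0 R) (hμ : MemP2 K μ) (hν : MemP2 K ν) : SW2sq μ ν ≠ ∞ := by
  refine ne_top_of_le_ne_top ?_ (lintegral_mono (W2sq_proj_le hKR hμ hν))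
  rw [lintegral_const]
  exact ENNReal.mul_ne_top (by finiteness) (measure_ne_top _ _)

lemma SW2sq_comm {d : ℕ} (μ ν : Measure (Ed d)) : SW2sq μ ν = SW2sq ν μ := by
  simp only [SW2sq]; congr 1; ext θ; rw [W2sq_comm]

lemma SW2_comm {d : ℕ} (μ ν : Measure (Ed d)) : SW2 μ ν = SW2 ν μ := by
  rw [SW2, SW2sq_comm]; rfl

lemma SW2sq_self {d : ℕ} (μ : Measure (Ed d)) : SW2sq μ μ = 0 := by
  simp [SW2sq, W2sq_self]

lemma SW2_sq {d : ℕ} (μ ν : Measure (Ed d)) : SW2 μ ν ^ 2 = (SW2sq μ ν).toReal :=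
  Real.sq_sqrt ENNReal.toReal_nonneg

lemma SW2_nonneg {d : ℕ} (μ ν : Measure (Ed d)) : 0 ≤ SW2 μ ν := Real.sqrt_nonneg _

lemma SW2_eq {d : ℕ} (μ ν : Measure (Ed d)) :
    SW2 μ ν = ((SW2sq μ ν) ^ ((1 : ℝ) / 2)).toReal := by
  rw [SW2, Real.sqrt_eq_rpow, ENNReal.toReal_rpow]

lemma SW2_triangle {d : ℕ} {μ ν ρ : Measure (Ed d)} {R : ℝ} {K : Set (Ed d)}
    (hKR : K ⊆ closedBall 0 R) (hμ : MemP2 K μ) (hν : MemP2 K ν) (hρ : MemP2 K ρ) :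
    SW2 μ ρ ≤ SW2 μ ν + SW2 ν ρ := by
  have := hμ.1
  have := hν.1
  have := hρ.1
  have f1 : (SW2sq μ ν) ^ ((1 : ℝ) / 2) ≠ ∞ :=
    ENNReal.rpow_ne_top_of_nonneg (by norm_num) (SW2sq_ne_top hKR hμ hν)
  have f2 : (SW2sq ν ρ) ^ ((1 : ℝ) / 2) ≠ ∞ :=
    ENNReal.rpow_ne_top_of_nonneg (by norm_num) (SW2sq_ne_top hKR hν hρ)
  rw [SW2_eq, SW2_eq, SW2_eq, ← ENNReal.toReal_add f1 f2]
  refine ENNReal.toReal_mono (ENNReal.add_ne_top.2 ⟨f1, f2⟩) ?_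
  have key := ENNReal.lintegral_Lp_add_le (μ := unifSphere d) (p := 2)
    (W2r_proj_continuous hKR hμ hν).measurable.aemeasurable
    (W2r_proj_continuous hKR hν hρ).measurable.aemeasurable (by norm_num)
  simp only [W2r_sq] at key
  refine le_trans (ENNReal.rpow_le_rpow ?_ (by norm_num)) key
  refine lintegral_mono fun θ => ?_
  have := map_proj_prob μ (θ : Ed d)
  have := map_proj_prob ν (θ : Ed d)
  have := map_proj_prob ρ (θ : Ed d)
  rw [← W2r_sq]
  exact ENNReal.rpow_le_rpow (W2r_triangle _ _ _) (by norm_num)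

lemma tendsto_SW2 {d : ℕ} {R : ℝ} {K : Set (Ed d)} (hKR : K ⊆ closedBall 0 R)
    (ν : ProbabilityMeasure (Ed d)) (hν : MemP2 K ν.toMeasure) :
    Tendsto (fun μ : ProbabilityMeasure (Ed d) => SW2 μ.toMeasure ν.toMeasure)
      (𝓝[{μ : ProbabilityMeasure (Ed d) | MemP2 K μ.toMeasure}] ν) (𝓝 0) := by
  have hmem : ∀ᶠ μ in 𝓝[{μ : ProbabilityMeasure (Ed d) | MemP2 K μ.toMeasure}] ν,
    MemP2 K μ.toMeasure := self_mem_nhdsWithin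
  have hfc : FirstCountableTopology (ProbabilityMeasure (Ed d)) := inferInstance
  have hcg : (𝓝[{μ : ProbabilityMeasure (Ed d) | MemP2 K μ.toMeasure}] ν).IsCountablyGenerated :=
    inferInstance
  have h : Tendsto (fun μ : ProbabilityMeasure (Ed d) => SW2sq μ.toMeasure ν.toMeasure)
      (𝓝[{μ : ProbabilityMeasure (Ed d) | MemP2 K μ.toMeasure}] ν)
      (𝓝 (∫⁻ _θ, 0 ∂(unifSphere d))) := by
    refine tendsto_lintegral_filter_of_dominated_convergence
      (fun _ => ENNReal.ofReal (2 * R) * ENNReal.ofReal (R + R)) ?_ ?_ ?_ ?_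
    · filter_upwards [hmem] with μ hμ
      exact W2sq_proj_measurable hKR hμ hν
    · filter_upwards [hmem] with μ hμ
      exact Eventually.of_forall (W2sq_proj_le hKR hμ hν)
    · rw [lintegral_const]
      exact ENNReal.mul_ne_top (by finiteness) (measure_ne_top _ _)
    · refine Eventually.of_forall fun θ => ?_
      have hid : Tendsto (fun μ : ProbabilityMeasure (Ed d) => μ)
        (𝓝[{μ : ProbabilityMeasure (Ed d) | MemP2 K μ.toMeasure}] ν) (𝓝 ν) := nhdsWithin_le_nhds
      have := ProbabilityMeasure.tendsto_map_of_tendsto_of_continuous _ _ hid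
        (proj_continuous (θ : Ed d))
      have hs : ∀ᶠ μ : ProbabilityMeasure (Ed d) in
          𝓝[{μ : ProbabilityMeasure (Ed d) | MemP2 K μ.toMeasure}] ν,
          ((μ.map (proj_continuous (θ : Ed d)).aemeasurable : ProbabilityMeasure ℝ) : Measure ℝ)
            (Set.Icc (-R) R)ᶜ = 0 := by
        filter_upwards [hmem] with μ hμ
        exact map_proj_supp hKR hμ.2.1 θ
      have hs2 : ((ν.map (proj_continuous (θ : Ed d)).aemeasurable : ProbabilityMeasure ℝ) :
          Measure ℝ) (Set.Icc (-R) R)ᶜ = 0 := map_proj_supp hKR hν.2.1 θ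
      have hfin := tendsto_W2sq _ _ this R hs hs2
      simp only [ProbabilityMeasure.toMeasure_map] at hfin
      exact hfin
  rw [lintegral_zero] at h
  have h2 := ((ENNReal.tendsto_toReal ENNReal.zero_ne_top).comp h).sqrt
  simpa [SW2] using h2

lemma memP2_of_supp {d : ℕ} {R : ℝ} {K : Set (Ed d)} (hKR : K ⊆ closedBall 0 R)
    (ν : ProbabilityMeasure (Ed d)) (h : ν.toMeasure Kᶜ = 0) : MemP2 K ν.toMeasure := by
  refine ⟨inferInstance, h, ?_⟩
  have hae : ∀ᵐ x ∂ν.toMeasure, x ∈ K := h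
  refine (lintegral_mono_ae (g := fun _ => ENNReal.ofReal R ^ 2) ?_).trans_lt
    (by rw [lintegral_const]; finiteness)
  filter_upwards [hae] with x hx
  have h1 : ‖x‖ ≤ R := by simpa using hKR hx
  gcongr
  change ‖x‖ₑ ≤ _
  rw [← ofReal_norm]
  exact ENNReal.ofReal_le_ofReal h1

lemma ultra_lim {d : ℕ} {R : ℝ} {K : Set (Ed d)} (hK : IsCompact K) (hKR : K ⊆ closedBall 0 R)
    (U : Ultrafilter (ProbabilityMeasure (Ed d)))
    (hU : ∀ᶠ μ in (U : Filter (ProbabilityMeasure (Ed d))), MemP2 K μ.toMeasure) :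
    ∃ ν : ProbabilityMeasure (Ed d), MemP2 K ν.toMeasure ∧
      (U : Filter _) ≤ 𝓝[{μ : ProbabilityMeasure (Ed d) | MemP2 K μ.toMeasure}] ν := by
  have hc : IsCompact (closure {μ : ProbabilityMeasure (Ed d) | MemP2 K μ.toMeasure}) := by
    refine isCompact_closure_of_isTightMeasureSet ?_
    rw [isTightMeasureSet_iff_exists_isCompact_measure_compl_le]
    intro ε _
    refine ⟨K, hK, ?_⟩
    rintro _ ⟨μ, hμ, rfl⟩
    rw [hμ.2.1]; exact zero_le
  obtain ⟨ν, -, hν⟩ := hc.ultrafilter_le_nhds U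
    (le_principal_iff.2 (mem_of_superset hU subset_closure))
  refine ⟨ν, memP2_of_supp hKR ν ?_, le_inf hν (le_principal_iff.2 hU)⟩
  have hid : Tendsto (fun μ : ProbabilityMeasure (Ed d) => μ) U (𝓝 ν) := hν
  have := ProbabilityMeasure.le_liminf_measure_open_of_tendsto hid hK.isClosed.isOpen_compl
  refine le_antisymm (this.trans ?_) zero_le
  refine le_of_eq_of_le (liminf_congr (v := fun _ => 0) ?_) (by simp)
  filter_upwards [hU] with μ hμ
  exact hμ.2.1

lemma equicont {d : ℕ} {R : ℝ} {K : Set (Ed d)} (hKR : K ⊆ closedBall 0 R)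
    (F : ProbabilityMeasure (Ed d) → ℝ) (b : ℝ)
    (hbF : ∀ ν : ProbabilityMeasure (Ed d), MemP2 K ν.toMeasure → b ≤ F ν)
    (μ0 : ProbabilityMeasure (Ed d))
    (μseq : ℝ → ℕ → ProbabilityMeasure (Ed d))
    (hstart : ∀ τ : ℝ, 0 < τ → μseq τ 0 = μ0)
    (hmem : ∀ τ : ℝ, 0 < τ → ∀ k, MemP2 K (μseq τ k).toMeasure)
    (hmin : ∀ τ : ℝ, 0 < τ → ∀ k, ∀ ν : ProbabilityMeasure (Ed d), MemP2 K ν.toMeasure →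
      (SW2sq (μseq τ (k + 1)).toMeasure (μseq τ k).toMeasure).toReal / (2 * τ)
          + F (μseq τ (k + 1)) ≤
        (SW2sq ν.toMeasure (μseq τ k).toMeasure).toReal / (2 * τ) + F ν) :
    ∀ τ : ℝ, 0 < τ → ∀ t : ℝ, 0 ≤ t → ∀ s : ℝ, 0 ≤ s →
      SW2 (μseq τ ⌈t / τ⌉₊).toMeasure (μseq τ ⌈s / τ⌉₊).toMeasure ≤
        Real.sqrt (2 * (F μ0 - b) * (|t - s| + τ)) := by
  intro τ hτ
  have hstep : ∀ k, SW2 (μseq τ (k + 1)).toMeasure (μseq τ k).toMeasure ^ 2 ≤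
      2 * τ * (F (μseq τ k) - F (μseq τ (k + 1))) := by
    intro k
    have h := hmin τ hτ k (μseq τ k) (hmem τ hτ k)
    rw [SW2sq_self] at h
    simp only [ENNReal.toReal_zero, zero_div, zero_add] at h
    rw [SW2_sq]
    have h2 : (SW2sq (μseq τ (k + 1)).toMeasure (μseq τ k).toMeasure).toReal / (2 * τ) ≤
      F (μseq τ k) - F (μseq τ (k + 1)) := by linarith
    rw [div_le_iff₀ (by positivity)] at h2
    linarith
  have hanti : Antitone fun k => F (μseq τ k) := by
    refine antitone_nat_of_succ_le fun k => ?_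
    have h0 := (sq_nonneg _).trans (hstep k)
    have := nonneg_of_mul_nonneg_right h0 (by positivity)
    linarith
  have hsum : ∀ l j : ℕ, SW2 (μseq τ (l + j)).toMeasure (μseq τ l).toMeasure ≤
      ∑ i ∈ Finset.range j, SW2 (μseq τ (l + i + 1)).toMeasure (μseq τ (l + i)).toMeasure := by
    intro l j
    induction j with
    | zero => simp [SW2, SW2sq_self]
    | succ j ih =>
      rw [Finset.sum_range_succ]
      have := SW2_triangle hKR (hmem τ hτ (l + j + 1)) (hmem τ hτ (l + j)) (hmem τ hτ l)
      rw [← add_assoc]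
      linarith
  have hmain : ∀ l j : ℕ, SW2 (μseq τ (l + j)).toMeasure (μseq τ l).toMeasure ^ 2 ≤
      j * (2 * τ * (F μ0 - b)) := by
    intro l j
    have h1 := pow_le_pow_left₀ (SW2_nonneg _ _) (hsum l j) 2
    have h2 := sq_sum_le_card_mul_sum_sq (s := Finset.range j)
      (f := fun i => SW2 (μseq τ (l + i + 1)).toMeasure (μseq τ (l + i)).toMeasure)
    rw [Finset.card_range] at h2
    refine (h1.trans h2).trans ?_
    gcongr
    calc _ ≤ ∑ i ∈ Finset.range j, 2 * τ * (F (μseq τ (l + i)) - F (μseq τ (l + (i + 1)))) :=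
          Finset.sum_le_sum fun i _ => hstep (l + i)
      _ = 2 * τ * (F (μseq τ (l + 0)) - F (μseq τ (l + j))) := by
          rw [← Finset.mul_sum, Finset.sum_range_sub' (fun i => F (μseq τ (l + i)))]
      _ ≤ _ := by
          have h3 : F (μseq τ (l + 0)) ≤ F (μseq τ 0) := hanti (Nat.zero_le _)
          rw [hstart τ hτ] at h3
          have h4 := hbF _ (hmem τ hτ (l + j))
          gcongr
  have hM0 : 0 ≤ F μ0 - b := by
    have := hbF _ (hmem τ hτ 0)
    rw [hstart τ hτ] at this
    linarith
  have hord : ∀ t : ℝ, 0 ≤ t → ∀ s : ℝ, 0 ≤ s → s ≤ t →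
      SW2 (μseq τ ⌈t / τ⌉₊).toMeasure (μseq τ ⌈s / τ⌉₊).toMeasure ≤
        Real.sqrt (2 * (F μ0 - b) * (|t - s| + τ)) := by
    intro t ht s hs hst
    have hle : ⌈s / τ⌉₊ ≤ ⌈t / τ⌉₊ := Nat.ceil_mono (by gcongr)
    obtain ⟨j, hj⟩ := Nat.exists_eq_add_of_le hle
    have hjr : (⌈t / τ⌉₊ : ℝ) = ⌈s / τ⌉₊ + j := by rw [hj]; push_cast; ring
    have c1 := Nat.ceil_lt_add_one (show 0 ≤ t / τ by positivity)
    have c2 := Nat.le_ceil (s / τ)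
    have hjt : (j : ℝ) * τ ≤ |t - s| + τ := by
      rw [abs_of_nonneg (by linarith)]
      have : (j : ℝ) ≤ t / τ + 1 - s / τ := by linarith
      calc (j : ℝ) * τ ≤ (t / τ + 1 - s / τ) * τ := by gcongr
        _ = _ := by field_simp; ring
    rw [hj]
    refine Real.le_sqrt_of_sq_le ((hmain _ _).trans ?_)
    calc (j : ℝ) * (2 * τ * (F μ0 - b)) = 2 * (F μ0 - b) * (j * τ) := by ring
      _ ≤ _ := by gcongr
  intro t ht s hs
  rcases le_total s t with h | h
  · exact hord t ht s hs h
  · rw [SW2_comm, abs_sub_comm]; exact hord s hs t ht h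

/-- For K compact, F lower semicontinuous and bounded below, and SW-JKO sequences
started at a fixed μ_0 for each step size τ > 0, there exist step sizes τ_n → 0 and a curve
μ : [0,T] → P_2(K), 1/2-Hölder continuous w.r.t. SW_2, such that the piecewise constant
interpolations μ^{τ_n} converge to μ in SW_2, uniformly in t ∈ [0,T]. -/
theorem swjko_limit_curve_exists (d : ℕ) (K : Set (Ed d)) (hK : IsCompact K)
    (F : ProbabilityMeasure (Ed d) → ℝ)
    (hFlsc : LowerSemicontinuousOn F {μ : ProbabilityMeasure (Ed d) | MemP2 K μ.toMeasure})
    (hFbdd : BddBelow (F '' {μ : ProbabilityMeasure (Ed d) | MemP2 K μ.toMeasure}))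
    (T : ℝ) (hT : 0 < T)
    (μ0 : ProbabilityMeasure (Ed d)) (hμ0 : MemP2 K μ0.toMeasure)
    (μseq : ℝ → ℕ → ProbabilityMeasure (Ed d))
    (hstart : ∀ τ : ℝ, 0 < τ → μseq τ 0 = μ0)
    (hmem : ∀ τ : ℝ, 0 < τ → ∀ k, MemP2 K (μseq τ k).toMeasure)
    (hmin : ∀ τ : ℝ, 0 < τ → ∀ k, ∀ ν : ProbabilityMeasure (Ed d), MemP2 K ν.toMeasure →
      (SW2sq (μseq τ (k + 1)).toMeasure (μseq τ k).toMeasure).toReal / (2 * τ)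
          + F (μseq τ (k + 1)) ≤
        (SW2sq ν.toMeasure (μseq τ k).toMeasure).toReal / (2 * τ) + F ν) :
    ∃ (τn : ℕ → ℝ) (μ : ℝ → ProbabilityMeasure (Ed d)),
      (∀ n, 0 < τn n) ∧
      Tendsto τn atTop (nhds 0) ∧
      (∀ t ∈ Set.Icc (0 : ℝ) T, MemP2 K (μ t).toMeasure) ∧
      (∃ C : ℝ, 0 ≤ C ∧ ∀ t ∈ Set.Icc (0 : ℝ) T, ∀ s ∈ Set.Icc (0 : ℝ) T,
        SW2 (μ t).toMeasure (μ s).toMeasure ≤ C * |t - s| ^ ((1 : ℝ) / 2)) ∧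
      (∀ ε : ℝ, 0 < ε → ∃ N : ℕ, ∀ n ≥ N, ∀ t ∈ Set.Icc (0 : ℝ) T,
        SW2 (μseq (τn n) ⌈t / τn n⌉₊).toMeasure (μ t).toMeasure ≤ ε) := by
  obtain ⟨R, hKR⟩ := hK.isBounded.subset_closedBall (0 : Ed d)
  obtain ⟨b, hb⟩ := hFbdd
  have hbF : ∀ ν : ProbabilityMeasure (Ed d), MemP2 K ν.toMeasure → b ≤ F ν :=
    fun ν hν => hb ⟨ν, hν, rfl⟩
  obtain ⟨M, hM⟩ : ∃ M, M = F μ0 - b := ⟨_, rfl⟩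
  have hM0 : 0 ≤ M := by linarith [hbF μ0 hμ0]
  have hequi := equicont hKR F b hbF μ0 μseq hstart hmem hmin
  rw [← hM] at hequi
  let U : Ultrafilter ℕ := hyperfilter ℕ
  have hU : (U : Filter ℕ) ≤ atTop := Nat.hyperfilter_le_atTop
  obtain ⟨σ, hσ⟩ : ∃ σ : ℕ → ℝ, σ = fun n : ℕ => 1 / ((n : ℝ) + 1) := ⟨_, rfl⟩
  have hσpos : ∀ n, 0 < σ n := fun n => by rw [hσ]; positivity
  have hσlim : Tendsto σ atTop (𝓝 0) := by rw [hσ]; exact tendsto_one_div_add_atTop_nhds_zero_nat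
  have hσU : Tendsto σ U (𝓝 0) := hσlim.mono_left hU
  have hex : ∀ t : ℝ, ∃ ν : ProbabilityMeasure (Ed d), MemP2 K ν.toMeasure ∧
      Tendsto (fun n => SW2 (μseq (σ n) ⌈t / σ n⌉₊).toMeasure ν.toMeasure) U (𝓝 0) := by
    intro t
    obtain ⟨ν, hν, hle⟩ := ultra_lim hK hKR (U.map fun n => μseq (σ n) ⌈t / σ n⌉₊)
      (Eventually.of_forall (f := (U : Filter ℕ)) fun n => hmem _ (hσpos n) _)
    exact ⟨ν, hν, (tendsto_SW2 hKR ν hν).comp hle⟩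
  choose μ hμmem hμlim using hex
  have hhold : ∀ t ∈ Set.Icc (0 : ℝ) T, ∀ s ∈ Set.Icc (0 : ℝ) T,
      SW2 (μ t).toMeasure (μ s).toMeasure ≤ Real.sqrt (2 * M * |t - s|) := by
    intro t ht s hs
    have hl : Tendsto (fun n => SW2 (μseq (σ n) ⌈t / σ n⌉₊).toMeasure (μ t).toMeasure +
        (Real.sqrt (2 * M * (|t - s| + σ n)) +
          SW2 (μseq (σ n) ⌈s / σ n⌉₊).toMeasure (μ s).toMeasure)) U
        (𝓝 (0 + (Real.sqrt (2 * M * (|t - s| + 0)) + 0))) :=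
      (hμlim t).add ((((hσU.const_add _).const_mul _).sqrt).add (hμlim s))
    simp only [add_zero, zero_add] at hl
    refine ge_of_tendsto hl (Eventually.of_forall fun n => ?_)
    have m1 := hmem _ (hσpos n) ⌈t / σ n⌉₊
    have m2 := hmem _ (hσpos n) ⌈s / σ n⌉₊
    have t1 := SW2_triangle hKR (hμmem t) m1 (hμmem s)
    have t2 := SW2_triangle hKR m1 m2 (hμmem s)
    rw [SW2_comm (μ t).toMeasure (μseq (σ n) ⌈t / σ n⌉₊).toMeasure] at t1
    linarith [hequi _ (hσpos n) t ht.1 s hs.1]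
  have hunif : ∀ ε : ℝ, 0 < ε → ∀ᶠ n in (U : Filter ℕ), ∀ t ∈ Set.Icc (0 : ℝ) T,
      SW2 (μseq (σ n) ⌈t / σ n⌉₊).toMeasure (μ t).toMeasure ≤ ε := by
    intro ε hε
    obtain ⟨δ, hδ⟩ : ∃ δ, δ = ε ^ 2 / (36 * (M + 1)) := ⟨_, rfl⟩
    have hδ0 : 0 < δ := by rw [hδ]; positivity
    have hδM : 2 * M * (δ + δ) ≤ (ε / 3) ^ 2 := by
      have : δ * (36 * (M + 1)) = ε ^ 2 := by rw [hδ]; field_simp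
      nlinarith
    obtain ⟨A, hAs, hAf, hAc⟩ := (isCompact_Icc (a := (0 : ℝ)) (b := T)).finite_cover_balls hδ0
    have h1 : ∀ᶠ n in (U : Filter ℕ), ∀ a ∈ A,
        SW2 (μseq (σ n) ⌈a / σ n⌉₊).toMeasure (μ a).toMeasure ≤ ε / 3 := by
      rw [hAf.eventually_all]
      intro a _
      exact (hμlim a).eventually (ge_mem_nhds (by positivity))
    have h2 : ∀ᶠ n in (U : Filter ℕ), σ n ≤ δ := hσU.eventually (ge_mem_nhds hδ0)
    filter_upwards [h1, h2] with n h1 h2 t ht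
    obtain ⟨a, haA, hta⟩ := Set.mem_iUnion₂.1 (hAc ht)
    have hta' : |t - a| ≤ δ := by
      have := mem_ball.1 hta
      rw [Real.dist_eq] at this; exact this.le
    have ha := hAs haA
    have m1 := hmem _ (hσpos n) ⌈t / σ n⌉₊
    have m2 := hmem _ (hσpos n) ⌈a / σ n⌉₊
    have t1 := SW2_triangle hKR m1 m2 (hμmem t)
    have t2 := SW2_triangle hKR m2 (hμmem a) (hμmem t)
    have e1 := hequi _ (hσpos n) t ht.1 a ha.1
    have e2 := hhold t ht a ha
    rw [SW2_comm] at e2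
    have b1 : Real.sqrt (2 * M * (|t - a| + σ n)) ≤ ε / 3 := by
      refine Real.sqrt_le_iff.2 ⟨by positivity, le_trans ?_ hδM⟩
      gcongr
    have b2 : Real.sqrt (2 * M * |t - a|) ≤ ε / 3 := by
      refine Real.sqrt_le_iff.2 ⟨by positivity, le_trans ?_ hδM⟩
      gcongr; linarith
    linarith [h1 a haA]
  have hsel : ∀ j : ℕ, ∃ n : ℕ, j ≤ n ∧ ∀ t ∈ Set.Icc (0 : ℝ) T,
      SW2 (μseq (σ n) ⌈t / σ n⌉₊).toMeasure (μ t).toMeasure ≤ σ j := fun j =>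
    (((eventually_ge_atTop j).filter_mono hU).and (hunif (σ j) (hσpos j))).exists
  choose n hn hnu using hsel
  refine ⟨fun j => σ (n j), μ, fun j => hσpos _, ?_, fun t _ => hμmem t, ?_, ?_⟩
  · exact hσlim.comp (tendsto_atTop_mono hn tendsto_id)
  · refine ⟨Real.sqrt (2 * M), Real.sqrt_nonneg _, fun t ht s hs => ?_⟩
    rw [← Real.sqrt_eq_rpow, ← Real.sqrt_mul (by positivity)]
    exact hhold t ht s hs
  · intro ε hε
    obtain ⟨N, hN⟩ := eventually_atTop.1 (hσlim.eventually (ge_mem_nhds hε))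
    exact ⟨N, fun j hj t ht => (hnu j t ht).trans (hN j hj)⟩
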